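/- Let k ≥ r ≥ 1 be integers, let ℓ = ⌈k/2⌉, and let F be a family of n distinct ℓ-element subsets of [k] = {1, …, k}. Suppose that there exists an [r]-preserving and [r]-intersection-shifting bijection h : F → F. Then the matrix C_n is (r, k−r, k−r)-coverable, and in particular R_B(C_n ⊗ C_n) ≤ k² − r². -/

import Mathlib

/-!
Identify the indices `1, …, n` with the members `D_i` of `F`. Every `x ∈ [k]` gives a rectangle
`{i | x ∈ D_i} × {j | x ∉ D_j}`, and since `F` is an antichain these rectangles cover exactly the
off-diagonal entries. Let `A₁` and `A₂` be the unions of the rectangles with `x < r` and `x ≥ r`,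
and let `A₃` be the union of the rectangles with `x ≥ r` built from the sets `h(D_i)` instead.
Then `A₁, A₂` cover `C_n`; so do `A₁, A₃`, because `h` is injective and does not change `A₁`; and
so do `A₂, A₃`, because `D_i ∖ D_j` either leaves `[r]` or is shifted out of `[r]` by `h`.

For the Kronecker square, each off-diagonal entry of `C_n` lies in at least two of the three `Aᵢ`.
By pigeonhole, `A₁ ⊗ A₂`, `A₂ ⊗ A₁` and `A₃ ⊗ A₃` together cover `C_n ⊗ C_n`, with
`2 r (k - r) + (k - r)² = k² - r²` rectangles.
-/

/-- A collection of `s` Boolean matrices covers `A` if `A` has a 1 exactly where some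
matrix of the collection has a 1. -/
def BCovers {α β : Type*} {s : ℕ} (M : Fin s → Matrix α β Bool) (A : Matrix α β Bool) : Prop :=
  ∀ i j, A i j = true ↔ ∃ t, M t i j = true

/-- A nonzero Boolean matrix whose 1-entries form a combinatorial rectangle. -/
def IsRank1 {α β : Type*} (M : Matrix α β Bool) : Prop :=
  (∃ i j, M i j = true) ∧ ∃ u : α → Bool, ∃ v : β → Bool, ∀ i j, M i j = (u i && v j)

/-- The Boolean rank of a 0,1-matrix: the smallest `s` such that `A` is the entrywise
Boolean sum (OR) of `s` matrices of Boolean rank 1. -/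
noncomputable def RB {α β : Type*} (A : Matrix α β Bool) : ℕ :=
  sInf {s | ∃ M : Fin s → Matrix α β Bool, (∀ t, IsRank1 (M t)) ∧ BCovers M A}

/-- The Kronecker product of Boolean matrices. -/
def bkron {α β γ δ : Type*} (A : Matrix α β Bool) (B : Matrix γ δ Bool) :
    Matrix (α × γ) (β × δ) Bool :=
  fun i j => A i.1 j.1 && B i.2 j.2

/-- The n × n matrix with zeros on the diagonal and ones everywhere else. -/
def Cmat (n : ℕ) : Matrix (Fin n) (Fin n) Bool := fun i j => decide (i ≠ j)

/-- σ(n): the smallest k with n ≤ binom(k, ⌈k/2⌉). -/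
noncomputable def sigmaFn (n : ℕ) : ℕ := sInf {k | n ≤ Nat.choose k ((k + 1) / 2)}

/-- (a₁,a₂,a₃)-coverability: three matrices of the given Boolean ranks, every two of
which cover `A`. -/
def Coverable3 {α β : Type*} (A : Matrix α β Bool) (a1 a2 a3 : ℕ) : Prop :=
  ∃ A1 A2 A3 : Matrix α β Bool,
    RB A1 ≤ a1 ∧ RB A2 ≤ a2 ∧ RB A3 ≤ a3 ∧
    (∀ i j, A i j = true ↔ (A1 i j = true ∨ A2 i j = true)) ∧
    (∀ i j, A i j = true ↔ (A1 i j = true ∨ A3 i j = true)) ∧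
    (∀ i j, A i j = true ↔ (A2 i j = true ∨ A3 i j = true))

/-- The number of 1-entries of a Boolean matrix. -/
def ones {α β : Type*} [Fintype α] [Fintype β] (A : Matrix α β Bool) : ℕ :=
  (Finset.univ.filter (fun p : α × β => A p.1 p.2 = true)).card

/-- The largest number of 1-entries in a monochromatic rectangle of ones of `A`. -/
noncomputable def maxRect {α β : Type*} [Fintype α] [Fintype β] (A : Matrix α β Bool) : ℕ :=
  sSup {c | ∃ M : Matrix α β Bool,
    IsRank1 M ∧ (∀ i j, M i j = true → A i j = true) ∧ c = ones M}

/-- `h` is `L`-preserving on the family `F`: it preserves intersections with `L`. -/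
def Preserving {k : ℕ} (F : Finset (Finset (Fin k))) (L : Finset (Fin k))
    (h : Finset (Fin k) → Finset (Fin k)) : Prop :=
  ∀ D ∈ F, D ∩ L = h D ∩ L

/-- `h` is `L`-intersection shifting on the family `F`. -/
def IntersectionShifting {k : ℕ} (F : Finset (Finset (Fin k))) (L : Finset (Fin k))
    (h : Finset (Fin k) → Finset (Fin k)) : Prop :=
  ∀ D ∈ F, ∀ E ∈ F, (D ∩ Eᶜ).Nonempty → D ∩ Eᶜ ⊆ L → ((h D ∩ (h E)ᶜ) \ L).Nonempty

/-- `A` is the union of a family of combinatorial rectangles indexed by `ι`. In contrast to the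
rank-1 matrices in the definition of `RB`, the rectangles may be empty. -/
def RectCover {α β : Type*} (A : Matrix α β Bool) (ι : Type*) : Prop :=
  ∃ (u : ι → α → Prop) (v : ι → β → Prop), ∀ i j, A i j = true ↔ ∃ t, u t i ∧ v t j

open Classical in
/-- Discarding the empty rectangles of a cover leaves a cover by matrices of Boolean rank 1. -/
theorem RectCover.RB_le {α β ι : Type*} [Fintype ι] {A : Matrix α β Bool}
    (hA : RectCover A ι) : RB A ≤ Fintype.card ι := by
  obtain ⟨u, v, huv⟩ := hA
  let S := {t : ι // (∃ i, u t i) ∧ ∃ j, v t j}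
  let e : S ≃ Fin (Fintype.card S) := Fintype.equivFin S
  refine le_trans (Nat.sInf_le ?_) (Fintype.card_subtype_le (α := ι) _ : Fintype.card S ≤ _)
  refine ⟨fun t i j => decide (u (e.symm t).1 i) && decide (v (e.symm t).1 j),
    fun t => ⟨?_, _, _, fun _ _ => rfl⟩, fun i j => ?_⟩
  · obtain ⟨⟨i, hi⟩, j, hj⟩ := (e.symm t).2
    exact ⟨i, j, by simp [hi, hj]⟩
  · rw [huv]
    constructor
    · rintro ⟨t, hi, hj⟩
      exact ⟨e ⟨t, ⟨i, hi⟩, j, hj⟩, by simp [hi, hj]⟩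
    · rintro ⟨t, ht⟩
      exact ⟨(e.symm t).1, by simpa using ht⟩

theorem RectCover.bkron {α β γ δ ι κ : Type*} {A : Matrix α β Bool} {B : Matrix γ δ Bool}
    (hA : RectCover A ι) (hB : RectCover B κ) : RectCover (bkron A B) (ι × κ) := by
  obtain ⟨u, v, huv⟩ := hA
  obtain ⟨u', v', huv'⟩ := hB
  refine ⟨fun t i => u t.1 i.1 ∧ u' t.2 i.2, fun t j => v t.1 j.1 ∧ v' t.2 j.2, fun i j => ?_⟩
  simp only [_root_.bkron, Bool.and_eq_true, huv, huv', Prod.exists]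
  constructor
  · rintro ⟨⟨s, h1, h2⟩, t, h3, h4⟩
    exact ⟨s, t, ⟨h1, h3⟩, h2, h4⟩
  · rintro ⟨s, t, ⟨h1, h3⟩, h2, h4⟩
    exact ⟨⟨s, h1, h2⟩, t, h3, h4⟩

theorem RectCover.or {α β ι κ : Type*} {A B C : Matrix α β Bool}
    (hA : RectCover A ι) (hB : RectCover B κ)
    (hC : ∀ i j, C i j = true ↔ (A i j = true ∨ B i j = true)) : RectCover C (ι ⊕ κ) := by
  obtain ⟨u, v, huv⟩ := hA
  obtain ⟨u', v', huv'⟩ := hB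
  refine ⟨Sum.elim u u', Sum.elim v v', fun i j => ?_⟩
  simp [hC, huv, huv', Sum.exists]

/-- If every two of three matrices cover `A`, then the Kronecker square of `A` is covered by
`A₁ ⊗ A₂`, `A₂ ⊗ A₁` and `A₃ ⊗ A₃`: each 1-entry of `A` lies in two of the three matrices, and two
pairs of indices always meet after one of them is transformed by the transposition `(1 2)`. -/
theorem RectCover.bkron_self {α β ι₁ ι₂ ι₃ : Type*} {A A1 A2 A3 : Matrix α β Bool}
    (h1 : RectCover A1 ι₁) (h2 : RectCover A2 ι₂) (h3 : RectCover A3 ι₃)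
    (h12 : ∀ i j, A i j = true ↔ (A1 i j = true ∨ A2 i j = true))
    (h13 : ∀ i j, A i j = true ↔ (A1 i j = true ∨ A3 i j = true))
    (h23 : ∀ i j, A i j = true ↔ (A2 i j = true ∨ A3 i j = true)) :
    RectCover (_root_.bkron A A) ((ι₁ × ι₂ ⊕ ι₂ × ι₁) ⊕ ι₃ × ι₃) := by
  refine ((h1.bkron h2).or (h2.bkron h1)
    (C := fun i j => _root_.bkron A1 A2 i j || _root_.bkron A2 A1 i j) (by simp)).or
    (h3.bkron h3) fun i j => ?_
  have a12 := h12 i.1 j.1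
  have a13 := h13 i.1 j.1
  have a23 := h23 i.1 j.1
  have b12 := h12 i.2 j.2
  have b13 := h13 i.2 j.2
  have b23 := h23 i.2 j.2
  simp only [_root_.bkron, Bool.and_eq_true, Bool.or_eq_true]
  tauto

/-- The union over `x ∈ L` of the rectangles `{i | x ∈ D i} × {j | x ∉ D j}`. -/
def diffMat {k n : ℕ} (D : Fin n → Finset (Fin k)) (L : Finset (Fin k)) :
    Matrix (Fin n) (Fin n) Bool :=
  fun i j => decide (∃ x ∈ L, x ∈ D i ∧ x ∉ D j)

theorem diffMat_rectCover {k n : ℕ} (D : Fin n → Finset (Fin k)) (L : Finset (Fin k)) :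
    RectCover (diffMat D L) L :=
  ⟨fun x i => x.1 ∈ D i, fun x j => x.1 ∉ D j, fun i j => by simp [diffMat, and_left_comm]⟩

theorem diffMat_RB_le {k n : ℕ} (D : Fin n → Finset (Fin k)) (L : Finset (Fin k)) :
    RB (diffMat D L) ≤ L.card := by
  simpa using (diffMat_rectCover D L).RB_le

/-- Distinct sets of equal size form an antichain, so the elements of `L` and those outside `L`
together witness all off-diagonal entries. -/
theorem Cmat_iff_diffMat {k n c : ℕ} (D : Fin n → Finset (Fin k)) (L : Finset (Fin k))
    (hinj : Function.Injective D) (hc : ∀ i, (D i).card = c) (i j : Fin n) :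
    Cmat n i j = true ↔ (diffMat D L i j = true ∨ diffMat D Lᶜ i j = true) := by
  simp only [Cmat, diffMat, decide_eq_true_eq, Finset.mem_compl]
  constructor
  · intro hij
    have hsub : ¬ D i ⊆ D j := fun hs =>
      hij (hinj (Finset.eq_of_subset_of_card_le hs (by rw [hc, hc])))
    obtain ⟨x, hx, hx'⟩ := Finset.not_subset.mp hsub
    by_cases hL : x ∈ L
    · exact Or.inl ⟨x, hL, hx, hx'⟩
    · exact Or.inr ⟨x, hL, hx, hx'⟩
  · rintro (⟨x, -, h1, h2⟩ | ⟨x, -, h1, h2⟩) rfl <;> exact h2 h1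

theorem coverable_of_shifting_bijection (k r n : ℕ) (hr : 1 ≤ r) (hrk : r ≤ k)
    (F : Finset (Finset (Fin k))) (hFcard : F.card = n)
    (hFsub : ∀ D ∈ F, D.card = (k + 1) / 2)
    (h : Finset (Fin k) → Finset (Fin k)) (hbij : Set.BijOn h ↑F ↑F)
    (hpres : Preserving F (Finset.univ.filter fun x : Fin k => (x : ℕ) < r) h)
    (hshift : IntersectionShifting F (Finset.univ.filter fun x : Fin k => (x : ℕ) < r) h) :
    Coverable3 (Cmat n) r (k - r) (k - r) ∧
    RB (bkron (Cmat n) (Cmat n)) ≤ k ^ 2 - r ^ 2 := by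
  set L : Finset (Fin k) := Finset.univ.filter fun x : Fin k => (x : ℕ) < r with hL
  have hLcard : L.card = r := by
    rw [hL, Fin.card_filter_val_lt, min_eq_right hrk]
  have hLccard : Lᶜ.card = k - r := by
    rw [Finset.card_compl, hLcard, Fintype.card_fin]
  let e : F ≃ Fin n := F.equivFinOfCardEq hFcard
  let D : Fin n → Finset (Fin k) := fun i => (e.symm i).1
  have hDF : ∀ i, D i ∈ F := fun i => (e.symm i).2
  have hDinj : Function.Injective D := Subtype.val_injective.comp e.symm.injective
  have hhinj : Function.Injective (fun i => h (D i)) := fun i j hij =>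
    hDinj (hbij.injOn (hDF i) (hDF j) hij)
  have h12 := Cmat_iff_diffMat D L hDinj fun i => hFsub _ (hDF i)
  -- The same antichain argument for the sets `h (D i)`, which also belong to `F`.
  have hh := Cmat_iff_diffMat (fun i => h (D i)) L hhinj fun i => hFsub _ (hbij.mapsTo (hDF i))
  have hD1 : diffMat (fun i => h (D i)) L = diffMat D L := by
    have hmem : ∀ i, ∀ x ∈ L, (x ∈ h (D i) ↔ x ∈ D i) := fun i x hx => by
      have := Finset.ext_iff.mp (hpres _ (hDF i)) x
      simp only [Finset.mem_inter, hx, and_true] at this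
      exact this.symm
    ext i j
    simp only [diffMat, decide_eq_decide]
    exact exists_congr fun x => and_congr_right fun hx => by rw [hmem i x hx, hmem j x hx]
  rw [hD1] at hh
  have h23 : ∀ i j, Cmat n i j = true ↔
      (diffMat D Lᶜ i j = true ∨ diffMat (fun i => h (D i)) Lᶜ i j = true) := by
    intro i j
    refine ⟨fun hij => ?_, ?_⟩
    · rcases (h12 i j).mp hij with h1 | h2
      · by_cases hsub : D i ∩ (D j)ᶜ ⊆ L
        · right
          obtain ⟨x, -, hxi, hxj⟩ := of_decide_eq_true h1
          obtain ⟨y, hy⟩ := hshift _ (hDF i) _ (hDF j) ⟨x, by simp [hxi, hxj]⟩ hsub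
          simp only [Finset.mem_sdiff, Finset.mem_inter, Finset.mem_compl] at hy
          exact decide_eq_true ⟨y, Finset.mem_compl.mpr hy.2, hy.1⟩
        · left
          obtain ⟨x, hx, hxL⟩ := Finset.not_subset.mp hsub
          simp only [Finset.mem_inter, Finset.mem_compl] at hx
          exact decide_eq_true ⟨x, Finset.mem_compl.mpr hxL, hx⟩
      · exact Or.inl h2
    · rintro (h2 | h3)
      · exact (h12 i j).mpr (Or.inr h2)
      · exact (hh i j).mpr (Or.inr h3)
  refine ⟨⟨diffMat D L, diffMat D Lᶜ, diffMat (fun i => h (D i)) Lᶜ, ?_, ?_, ?_, h12, hh, h23⟩, ?_⟩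
  · exact (diffMat_RB_le _ _).trans_eq hLcard
  · exact (diffMat_RB_le _ _).trans_eq hLccard
  · exact (diffMat_RB_le _ _).trans_eq hLccard
  · refine ((diffMat_rectCover D L).bkron_self (diffMat_rectCover D Lᶜ)
      (diffMat_rectCover (fun i => h (D i)) Lᶜ) h12 hh h23).RB_le.trans_eq ?_
    simp only [Fintype.card_sum, Fintype.card_prod, Fintype.card_coe, hLcard, hLccard]
    obtain ⟨m, rfl⟩ := Nat.exists_eq_add_of_le hrk
    rw [Nat.add_sub_cancel_left]
    refine (Nat.sub_eq_of_eq_add ?_).symm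
    ring
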